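/- Let I ⊆ ℝ be an open interval, and let F₁, F₂ : ℝ → ℝ be twice differentiable on I with F₁(x) > 0 for all x ∈ I and F₁ not constant on I (i.e. F₁'(x₁) ≠ 0 for some x₁ ∈ I). If for all x ∈ I one has 2·F₁''(x)·F₁(x) − 3·(F₁'(x))² = 0 and 2·F₂''(x)·F₁(x) + F₂'(x)·F₁'(x) = 0, then there exist real constants a ≠ 0, b, c, d such that for all x ∈ I: F₁(x) = (a·x − b)⁻² and F₂(x) = c + d·(x − b/a)². -/

import Mathlib

/-!
The first equation says exactly that `g = F₁ ^ (-1/2)` has vanishing second derivative, so on the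
interval `g` is affine, `g x = a x - b`, with `a ≠ 0` because `F₁` is not constant. As
`F₁' / (2 F₁) = -a / g`, the second equation becomes `F₂'' g = a F₂'`, i.e. `F₂' / g` is a
constant `k`; integrating `F₂' = k (a x - b)` gives the quadratic with `d = k a / 2`.
-/

/-- A function with zero derivative on an open interval (possibly empty) is constant there. -/
lemma exists_const_of_hasDerivAt_zero {I : Set ℝ} (hIopen : IsOpen I) (hIconn : I.OrdConnected)
    {f : ℝ → ℝ} (hf : ∀ x ∈ I, HasDerivAt f 0 x) : ∃ k, ∀ x ∈ I, f x = k :=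
  hIopen.exists_is_const_of_deriv_eq_zero hIconn.isPreconnected
    (fun x hx => (hf x hx).differentiableAt.differentiableWithinAt) (fun x hx => (hf x hx).deriv)

/-- Conformal flatness conditions of the four-dimensional Eisenhart metric
`ds² = dx² + dz²/(α F₁) + 2 du dv − 2 F₂ du²`: on an open interval where
`F₁ > 0` and `F₁` is not constant, the system
`2 F₁'' F₁ − 3 (F₁')² = 0`, `2 F₂'' F₁ + F₂' F₁' = 0` forces
`F₁(x) = (a x − b)⁻²` and `F₂(x) = c + d (x − b/a)²`. -/
theorem conformally_flat_H13
    (I : Set ℝ) (hIopen : IsOpen I) (hIconn : I.OrdConnected)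
    (F₁ F₁' F₁'' F₂ F₂' F₂'' : ℝ → ℝ)
    (hF₁' : ∀ x ∈ I, HasDerivAt F₁ (F₁' x) x)
    (hF₁'' : ∀ x ∈ I, HasDerivAt F₁' (F₁'' x) x)
    (hF₂' : ∀ x ∈ I, HasDerivAt F₂ (F₂' x) x)
    (hF₂'' : ∀ x ∈ I, HasDerivAt F₂' (F₂'' x) x)
    (hpos : ∀ x ∈ I, 0 < F₁ x)
    (hnonconst : ∃ x₁ ∈ I, F₁' x₁ ≠ 0)
    (heq1 : ∀ x ∈ I, 2 * F₁'' x * F₁ x - 3 * (F₁' x) ^ 2 = 0)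
    (heq2 : ∀ x ∈ I, 2 * F₂'' x * F₁ x + F₂' x * F₁' x = 0) :
    ∃ a b c d : ℝ, a ≠ 0 ∧ ∀ x ∈ I,
      F₁ x = ((a * x - b) ^ 2)⁻¹ ∧ F₂ x = c + d * (x - b / a) ^ 2 := by
  have hs : ∀ x ∈ I, 0 < √(F₁ x) := fun x hx => Real.sqrt_pos.2 (hpos x hx)
  have hsq : ∀ x ∈ I, √(F₁ x) ^ 2 = F₁ x := fun x hx => Real.sq_sqrt (hpos x hx).le
  have hg : ∀ x ∈ I, HasDerivAt (fun y => (√(F₁ y))⁻¹) (-(F₁' x) / (2 * √(F₁ x) ^ 3)) x := by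
    intro x hx
    have h0 := hs x hx
    refine (((hF₁' x hx).sqrt (hpos x hx).ne').inv h0.ne').congr_deriv ?_
    field_simp
  obtain ⟨a, ha⟩ : ∃ a, ∀ x ∈ I, -(F₁' x) / (2 * √(F₁ x) ^ 3) = a := by
    apply exists_const_of_hasDerivAt_zero hIopen hIconn
    intro x hx
    have h0 := hs x hx
    have h1 := heq1 x hx
    refine ((hF₁'' x hx).neg.div ((((hF₁' x hx).sqrt (hpos x hx).ne').pow 3).const_mul 2)
      (mul_ne_zero two_ne_zero (pow_ne_zero 3 h0.ne'))).congr_deriv ?_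
    rw [← hsq x hx] at h1
    simp only [Pi.neg_apply, Pi.pow_apply]
    rw [div_eq_zero_iff]
    left
    field_simp
    push_cast
    linear_combination -√(F₁ x) ^ 2 * h1
  obtain ⟨b, hb⟩ : ∃ b, ∀ x ∈ I, a * x - (√(F₁ x))⁻¹ = b := by
    apply exists_const_of_hasDerivAt_zero hIopen hIconn
    intro x hx
    refine (((hasDerivAt_id x).const_mul a).sub (hg x hx)).congr_deriv ?_
    rw [ha x hx]
    ring
  have hgx : ∀ x ∈ I, a * x - b = (√(F₁ x))⁻¹ := fun x hx => by linarith [hb x hx]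
  have hapos : ∀ x ∈ I, 0 < a * x - b := fun x hx => by
    rw [hgx x hx]; exact inv_pos.2 (hs x hx)
  have hane : a ≠ 0 := by
    obtain ⟨x₁, hx₁, hne⟩ := hnonconst
    have h0 := hs x₁ hx₁
    rw [← ha x₁ hx₁]
    exact div_ne_zero (neg_ne_zero.2 hne) (by positivity)
  -- The second equation, rewritten in terms of the affine function.
  have hode : ∀ x ∈ I, F₂'' x * (a * x - b) = F₂' x * a := by
    intro x hx
    have h0 := hs x hx
    have h2 := heq2 x hx
    rw [hgx x hx, ← ha x hx]
    rw [← hsq x hx] at h2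
    field_simp
    linear_combination h2
  obtain ⟨k, hk⟩ : ∃ k, ∀ x ∈ I, F₂' x / (a * x - b) = k := by
    apply exists_const_of_hasDerivAt_zero hIopen hIconn
    intro x hx
    refine ((hF₂'' x hx).div (((hasDerivAt_id x).const_mul a).sub_const b)
      (hapos x hx).ne').congr_deriv ?_
    simp [hode x hx]
  obtain ⟨c, hc⟩ : ∃ c, ∀ x ∈ I, F₂ x - k * a / 2 * (x - b / a) ^ 2 = c := by
    apply exists_const_of_hasDerivAt_zero hIopen hIconn
    intro x hx
    refine ((hF₂' x hx).sub
      ((((hasDerivAt_id x).sub_const (b / a)).pow 2).const_mul (k * a / 2))).congr_deriv ?_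
    rw [(div_eq_iff (hapos x hx).ne').1 (hk x hx)]
    simp
    field_simp
    ring
  refine ⟨a, b, c, k * a / 2, hane, fun x hx => ⟨?_, by linarith [hc x hx]⟩⟩
  rw [hgx x hx, inv_pow, inv_inv, hsq x hx]
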